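/- arXiv:2306.17304 — 7 statements merged into one kernel-verified Lean document; each statement's English description precedes it below -/
import Mathlib

section
/- Let T : ℚ[x] → ℚ[x] be the linear operator defined by T(p) = x·p − (1/12)·p′, where p′ denotes the derivative of p. Then for every odd integer t ≥ 1, T^t(1) = Σ_{k=0}^{⌊t/2⌋} C(t,2k) · ((2k)!/(k!·(−24)^k)) · x^{t−2k}. -/
open Polynomial

/-!
Up to rescaling, `p ↦ X * p - c * p'` is the raising operator `p ↦ X * p - p'` of the
probabilists' Hermite polynomials. Giving `X` weight `1` and `c` weight `2` makes the operator
homogeneous of weight `1`, so the coefficient of `X ^ j` in its `n`-th iterate at `1` is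
`c ^ ((n - j) / 2)` times the one in `hermite n`. The known Hermite coefficients
`(-1) ^ k * (2 * k - 1)‼ * n.choose (2 * k)` of `X ^ (n - 2 * k)`, together with
`(2 * k)! = 2 ^ k * k! * (2 * k - 1)‼`, then give the formula.
-/

open scoped Nat

theorem eq_sum_range_of_coeff_eq_zero_of_odd_add {R : Type*} [Semiring R] {p : R[X]} {n : ℕ}
    (hdeg : p.natDegree ≤ n) (hodd : ∀ j, Odd (n + j) → p.coeff j = 0) :
    p = ∑ k ∈ Finset.range (n / 2 + 1), C (p.coeff (n - 2 * k)) * X ^ (n - 2 * k) := by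
  ext j
  simp only [finsetSum_coeff, coeff_C_mul_X_pow]
  by_cases hj : j ≤ n ∧ Even (n + j)
  · obtain ⟨k, rfl⟩ : ∃ k, n = j + 2 * k := ⟨(n - j) / 2, by grind⟩
    rw [Finset.sum_eq_single k]
    · simp
    · exact fun i hi hik => if_neg (by grind)
    · exact fun hk => absurd (Finset.mem_range.2 (by lia)) hk
  · have hcoeff : p.coeff j = 0 := by
      rcases not_and_or.1 hj with hlt | hparity
      · exact coeff_eq_zero_of_natDegree_lt (by lia)
      · exact hodd j (Nat.not_even_iff_odd.1 hparity)
    rw [hcoeff, Finset.sum_eq_zero]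
    exact fun k hk => if_neg (by grind)

theorem coeff_hermite_sub_two_mul {n k : ℕ} (hk : 2 * k ≤ n) :
    (hermite n).coeff (n - 2 * k) = (-1) ^ k * (2 * k - 1)‼ * n.choose (2 * k) := by
  obtain ⟨j, rfl⟩ := Nat.exists_eq_add_of_le hk
  rw [Nat.add_sub_cancel_left, coeff_hermite_explicit, Nat.choose_symm_add]

theorem factorial_two_mul (k : ℕ) : (2 * k)! = 2 ^ k * k ! * (2 * k - 1)‼ := by
  cases k with
  | zero => rfl
  | succ k =>
    rw [← Nat.doubleFactorial_two_mul]
    exact Nat.factorial_eq_mul_doubleFactorial (2 * k + 1)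

section CommRing

variable {R : Type*} [CommRing R]

/-- The operator `x - c · d/dx` on polynomials: the raising operator of the Hermite polynomials
of variance `c`. At `c = 1` its iterates at `1` are `Polynomial.hermite`, and at `c = 1/12` it
is the Heisenberg mode `h[-1]`. -/
noncomputable def hermiteRaising (c : R) (p : R[X]) : R[X] :=
  X * p - C c * derivative p

theorem coeff_hermiteRaising_zero (c : R) (p : R[X]) :
    (hermiteRaising c p).coeff 0 = -(c * p.coeff 1) := by
  simp [hermiteRaising, coeff_derivative]

theorem coeff_hermiteRaising_succ (c : R) (p : R[X]) (j : ℕ) :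
    (hermiteRaising c p).coeff (j + 1) = p.coeff j - c * ((j + 2) * p.coeff (j + 2)) := by
  rw [hermiteRaising, coeff_sub, coeff_X_mul, coeff_C_mul, coeff_derivative]
  push_cast
  ring

theorem mul_pow_mul_coeff_hermite_add_two (c : R) (n j : ℕ) :
    c * (c ^ ((n - (j + 2)) / 2) * ((hermite n).coeff (j + 2) : R)) =
      c ^ ((n - j) / 2) * (hermite n).coeff (j + 2) := by
  rcases lt_or_ge n (j + 2) with hlt | hle
  · simp [coeff_hermite_of_lt hlt]
  · rw [show (n - j) / 2 = (n - (j + 2)) / 2 + 1 by lia]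
    ring

theorem coeff_iterate_hermiteRaising_one (c : R) (n j : ℕ) :
    ((hermiteRaising c)^[n] 1).coeff j = c ^ ((n - j) / 2) * (hermite n).coeff j := by
  induction n generalizing j with
  | zero => simp [coeff_one]
  | succ n ih =>
    rw [Function.iterate_succ_apply']
    cases j with
    | zero =>
      rw [coeff_hermiteRaising_zero, ih, coeff_hermite_succ_zero]
      cases n with
      | zero => simp [coeff_one]
      | succ n =>
        rw [show (n + 1 + 1 - 0) / 2 = (n + 1 - 1) / 2 + 1 by lia]
        push_cast
        ring
    | succ j =>
      rw [coeff_hermiteRaising_succ, ih, ih, coeff_hermite_succ_succ, Nat.add_sub_add_right]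
      push_cast
      linear_combination -(j + 2 : R) * mul_pow_mul_coeff_hermite_add_two c n j

theorem iterate_hermiteRaising_one (c : R) (n : ℕ) :
    (hermiteRaising c)^[n] 1 = ∑ k ∈ Finset.range (n / 2 + 1),
      C ((-c) ^ k * (2 * k - 1)‼ * n.choose (2 * k)) * X ^ (n - 2 * k) := by
  have hdeg : ((hermiteRaising c)^[n] 1).natDegree ≤ n :=
    natDegree_le_iff_coeff_eq_zero.2 fun j hj => by
      simp [coeff_iterate_hermiteRaising_one, coeff_hermite_of_lt hj]
  have hodd (j : ℕ) (hj : Odd (n + j)) : ((hermiteRaising c)^[n] 1).coeff j = 0 := by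
    simp [coeff_iterate_hermiteRaising_one, coeff_hermite_of_odd_add hj]
  rw [eq_sum_range_of_coeff_eq_zero_of_odd_add hdeg hodd]
  refine Finset.sum_congr rfl fun k hk => ?_
  have hkn : 2 * k ≤ n := by grind
  rw [coeff_iterate_hermiteRaising_one, coeff_hermite_sub_two_mul hkn,
    show (n - (n - 2 * k)) / 2 = k by lia, neg_pow c]
  push_cast
  ring_nf

end CommRing

theorem heisenberg_square_bracket_power_general {K : Type*} [Field K] [CharZero K] (c : K)
    (T : K[X] → K[X]) (hT : ∀ p : K[X], T p = X * p - C c * derivative p) (t : ℕ) :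
    T^[t] 1 = ∑ k ∈ Finset.range (t / 2 + 1),
      C ((t.choose (2 * k) : K) * (2 * k)! / k ! * (-c / 2) ^ k) * X ^ (t - 2 * k) := by
  obtain rfl : T = hermiteRaising c := funext hT
  rw [iterate_hermiteRaising_one]
  refine Finset.sum_congr rfl fun k _ => ?_
  have hk : (k ! : K) ≠ 0 := Nat.cast_ne_zero.2 k.factorial_ne_zero
  rw [factorial_two_mul, div_pow]
  push_cast
  field_simp

/-- Lemma 3.1: with `T` realizing the square-bracket Heisenberg mode `h[-1]` on polynomial
states (`x = h(-1)`), for every odd `t ≥ 1`,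
`T^t(1) = ∑_{k=0}^{⌊t/2⌋} C(t,2k) · (2k)!/(k!·(−24)^k) · x^{t−2k}`. -/
theorem heisenberg_square_bracket_power
    (T : Polynomial ℚ → Polynomial ℚ)
    (hT : ∀ p : Polynomial ℚ, T p = X * p - Polynomial.C (1/12 : ℚ) * derivative p)
    (t : ℕ) (ht : Odd t) (ht1 : 1 ≤ t) :
    T^[t] 1 = ∑ k ∈ Finset.range (t / 2 + 1),
      Polynomial.C ((t.choose (2 * k) : ℚ) * ((2 * k).factorial : ℚ) /
        ((k.factorial : ℚ) * (-24 : ℚ) ^ k)) * X ^ (t - 2 * k) := by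
  have hscale : (-(1 / 12) / 2 : ℚ) = (-24)⁻¹ := by norm_num
  simp only [heisenberg_square_bracket_power_general _ T hT, hscale, inv_pow, ← div_eq_mul_inv,
    div_div]
end

section
/- Let T : ℚ[x] → ℚ[x] be the linear operator defined by T(p) = x·p − (1/12)·p′, where p′ denotes the derivative of p. Then for every odd integer t ≥ 1, the derivative of T^t(1) satisfies (T^t(1))′ = Σ_{k=0}^{⌊(t−1)/2⌋} C(t,2k+1) · ((2k+1)!/(k!·(−24)^k)) · x^{t−2k−1}. -/
open Polynomial

/-!
Multiplication by `X` conjugated by `exp (-a D² / 2)` is `p ↦ X * p - a * p'`, because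
`[D², X] = 2 D`. As `exp (-a D² / 2)` fixes `1`, the `t`-th iterate of `p ↦ X * p - a * p'` sends
`1` to `exp (-a D² / 2) (X ^ t)`, whose derivative is read off term by term. Since
`D ^ (2 * k) / (2 ^ k * k!)` is `(2 * k - 1)‼` times the Hasse derivative of order `2 * k`, the
argument needs no division and works over every commutative ring.
-/

open Finset
open scoped Nat

section HasseDeriv

variable {R : Type*} [Semiring R]

theorem hasseDeriv_succ_X_mul (m : ℕ) (p : R[X]) :
    hasseDeriv (m + 1) (X * p) = X * hasseDeriv (m + 1) p + hasseDeriv m p := by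
  ext i
  cases i with
  | zero => simp [hasseDeriv_coeff]
  | succ i =>
    have hpascal : (i + m + 1 + 1).choose (m + 1) =
        (i + m + 1).choose (m + 1) + (i + m + 1).choose m := by
      rw [Nat.choose_succ_succ', add_comm]
    simp only [coeff_add, coeff_X_mul, hasseDeriv_coeff, ← add_assoc, add_right_comm i 1 m]
    rw [hpascal, Nat.cast_add, add_mul]

theorem derivative_hasseDeriv (m : ℕ) (p : R[X]) :
    derivative (hasseDeriv m p) = (m + 1) • hasseDeriv (m + 1) p := by
  simpa [add_comm 1 m, add_mul] using LinearMap.congr_fun (hasseDeriv_comp (R := R) 1 m) p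

theorem hasseDeriv_X_pow (m n : ℕ) :
    hasseDeriv m (X ^ n : R[X]) = C (n.choose m : R) * X ^ (n - m) := by
  rw [X_pow_eq_monomial, hasseDeriv_monomial, mul_one, C_mul_X_pow_eq_monomial]

end HasseDeriv

section ExpDerivSq

variable {R : Type*} [CommRing R]

/-- The operator `exp (-a D² / 2)` on polynomials, truncated to the terms of order less than `2 * N`
in `D`. The truncation makes the sum finite; it does not affect polynomials of degree less than
`2 * N`. At `k = 0` the double factorial is `0‼ = 1`, by truncated subtraction. -/
noncomputable def truncExpDerivSq (a : R) (N : ℕ) : R[X] →ₗ[R] R[X] :=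
  ∑ k ∈ range N, ((-a) ^ k * ((2 * k - 1)‼ : R)) • hasseDeriv (2 * k)

theorem truncExpDerivSq_apply (a : R) (N : ℕ) (p : R[X]) :
    truncExpDerivSq a N p =
      ∑ k ∈ range N, C ((-a) ^ k * ((2 * k - 1)‼ : R)) * hasseDeriv (2 * k) p := by
  simp [truncExpDerivSq, LinearMap.sum_apply, smul_eq_C_mul]

theorem truncExpDerivSq_one (a : R) (N : ℕ) : truncExpDerivSq a (N + 1) 1 = 1 := by
  simp [truncExpDerivSq_apply, sum_range_succ', hasseDeriv_apply_one]

theorem derivative_truncExpDerivSq (a : R) (N : ℕ) (p : R[X]) :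
    derivative (truncExpDerivSq a N p) =
      ∑ k ∈ range N, C ((-a) ^ k * ((2 * k + 1)‼ : R)) * hasseDeriv (2 * k + 1) p := by
  rw [truncExpDerivSq_apply, derivative_sum]
  refine sum_congr rfl fun k _ ↦ ?_
  rw [derivative_C_mul, derivative_hasseDeriv, Nat.doubleFactorial_add_one]
  simp only [nsmul_eq_mul, Nat.cast_mul, map_mul, map_natCast]
  ring

theorem truncExpDerivSq_succ_X_mul (a : R) (N : ℕ) (p : R[X]) :
    truncExpDerivSq a (N + 1) (X * p) =
      X * truncExpDerivSq a (N + 1) p - C a * derivative (truncExpDerivSq a N p) := by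
  rw [derivative_truncExpDerivSq, truncExpDerivSq_apply, truncExpDerivSq_apply,
    sum_range_succ', sum_range_succ', mul_add, mul_sum, mul_sum, add_sub_right_comm,
    ← sum_sub_distrib]
  congr 1
  · refine sum_congr rfl fun k _ ↦ ?_
    rw [show 2 * (k + 1) = 2 * k + 1 + 1 by ring, hasseDeriv_succ_X_mul, Nat.add_sub_cancel,
      pow_succ]
    simp only [map_mul, map_neg]
    ring
  · simp

theorem derivative_truncExpDerivSq_succ {N : ℕ} {p : R[X]} (hp : p.natDegree < 2 * N + 1) (a : R) :
    derivative (truncExpDerivSq a (N + 1) p) = derivative (truncExpDerivSq a N p) := by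
  rw [derivative_truncExpDerivSq, derivative_truncExpDerivSq, sum_range_succ,
    hasseDeriv_eq_zero_of_lt_natDegree p _ hp, mul_zero, add_zero]

theorem iterate_one_eq_truncExpDerivSq_X_pow {a : R} {T : R[X] → R[X]}
    (hT : ∀ p, T p = X * p - C a * derivative p) {n N : ℕ} (hn : n ≤ 2 * N + 1) :
    T^[n] 1 = truncExpDerivSq a (N + 1) (X ^ n) := by
  induction n with
  | zero => simp [truncExpDerivSq_one]
  | succ n ih =>
    have hdeg : (X ^ n : R[X]).natDegree < 2 * N + 1 := (natDegree_X_pow_le n).trans_lt hn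
    rw [Function.iterate_succ_apply', ih (by lia), hT, derivative_truncExpDerivSq_succ hdeg,
      ← truncExpDerivSq_succ_X_mul, pow_succ']

theorem heisenberg_h1_square_bracket_power_general {a : R} {T : R[X] → R[X]}
    (hT : ∀ p, T p = X * p - C a * derivative p) (t : ℕ) :
    derivative (T^[t] 1) = ∑ k ∈ range ((t - 1) / 2 + 1),
      C ((t.choose (2 * k + 1) : R) * ((-a) ^ k * ((2 * k + 1)‼ : R))) * X ^ (t - 2 * k - 1) := by
  set N := (t - 1) / 2 + 1
  have hdeg : (X ^ t : R[X]).natDegree < 2 * N + 1 := (natDegree_X_pow_le t).trans_lt (by lia)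
  rw [iterate_one_eq_truncExpDerivSq_X_pow hT (N := N) (by lia),
    derivative_truncExpDerivSq_succ hdeg, derivative_truncExpDerivSq]
  refine sum_congr rfl fun k _ ↦ ?_
  rw [hasseDeriv_X_pow, ← mul_assoc, ← C_mul, mul_comm (t.choose _ : R), Nat.sub_sub]

end ExpDerivSq

theorem factorial_two_mul_add_one_div_factorial_mul_pow {K : Type*} [Field K] [CharZero K]
    (c : K) (k : ℕ) :
    ((2 * k + 1)! : K) / ((k ! : K) * (2 * c) ^ k) = c⁻¹ ^ k * ((2 * k + 1)‼ : K) := by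
  have hfact : (k ! : K) ≠ 0 := Nat.cast_ne_zero.mpr k.factorial_ne_zero
  rw [Nat.factorial_eq_mul_doubleFactorial, Nat.doubleFactorial_two_mul, mul_pow, inv_pow]
  push_cast
  field_simp

/-- Lemma 3.3: with `T` realizing the square-bracket Heisenberg mode `h[-1]` on polynomial
states (`x = h(-1)`, and the derivative realizing the mode `h(1)`), for every odd `t ≥ 1`,
`(T^t(1))′ = ∑_{k=0}^{⌊(t−1)/2⌋} C(t,2k+1) · (2k+1)!/(k!·(−24)^k) · x^{t−2k−1}`. -/
theorem heisenberg_h1_square_bracket_power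
    (T : Polynomial ℚ → Polynomial ℚ)
    (hT : ∀ p : Polynomial ℚ, T p = X * p - Polynomial.C (1/12 : ℚ) * derivative p)
    (t : ℕ) (ht : Odd t) (ht1 : 1 ≤ t) :
    derivative (T^[t] 1) = ∑ k ∈ Finset.range ((t - 1) / 2 + 1),
      Polynomial.C ((t.choose (2 * k + 1) : ℚ) * ((2 * k + 1).factorial : ℚ) /
        ((k.factorial : ℚ) * (-24 : ℚ) ^ k)) * X ^ (t - 2 * k - 1) := by
  simp_rw [heisenberg_h1_square_bracket_power_general hT, mul_div_assoc,
    show (-24 : ℚ) = 2 * -12 by norm_num, factorial_two_mul_add_one_div_factorial_mul_pow,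
    show (-12 : ℚ)⁻¹ = -(1 / 12) by norm_num]
end

section
/- Let p be an odd prime, let l ≥ 1 and n ≥ 0 be integers, let 0 ≤ a ≤ b be integers, and set r = p^a(p−1) + l and s = p^b(p−1) + l. Then Σ_{j=0}^{n} C(n,j)·(−1)^{n+j}·(j+1)^{r−1} ≡ Σ_{j=0}^{n} C(n,j)·(−1)^{n+j}·(j+1)^{s−1} (mod p^{a+1}) as integers. -/
/-!
The congruence holds term by term: modulo `p ^ k`, the power `x ^ e` depends only on `e` modulo
`φ (p ^ k)` once `k ≤ e`. If `p ∤ x` this is Euler's theorem, and if `p ∣ x` the power vanishes.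
-/

theorem int_pow_modEq_pow_of_isCoprime {m e f : ℕ} {x : ℤ} (hx : IsCoprime x m)
    (hef : e ≡ f [MOD m.totient]) : x ^ e ≡ x ^ f [ZMOD m] := by
  have hx_unit : IsUnit (x : ZMod m) := (ZMod.coe_int_isUnit_iff_isCoprime x m).2 hx.symm
  have hx_totient : (x : ZMod m) ^ m.totient = 1 := by
    obtain ⟨u, hu⟩ := hx_unit
    rw [← hu, ← Units.val_pow_eq_pow_val, ZMod.pow_totient, Units.val_one]
  rw [← ZMod.intCast_eq_intCast_iff]
  exact_mod_cast pow_eq_pow_of_modEq hef hx_totient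

theorem int_pow_modEq_zero_of_dvd {d x : ℤ} {k e : ℕ} (hx : d ∣ x) (hke : k ≤ e) :
    x ^ e ≡ 0 [ZMOD d ^ k] :=
  Int.modEq_zero_iff_dvd.2 ((pow_dvd_pow d hke).trans (pow_dvd_pow_of_dvd hx e))

theorem int_pow_modEq_pow_of_modEq_totient {p k e f : ℕ} (hp : p.Prime) (hke : k ≤ e)
    (hkf : k ≤ f) (hef : e ≡ f [MOD (p ^ k).totient]) (x : ℤ) :
    x ^ e ≡ x ^ f [ZMOD (p : ℤ) ^ k] := by
  rcases dvd_or_isCoprime (p : ℤ) x (Nat.prime_iff_prime_int.1 hp).irreducible with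
    hdvd | hcoprime
  · exact (int_pow_modEq_zero_of_dvd hdvd hke).trans (int_pow_modEq_zero_of_dvd hdvd hkf).symm
  · have hx : IsCoprime x (p ^ k : ℕ) := by
      simpa using hcoprime.symm.pow_right (n := k)
    exact_mod_cast int_pow_modEq_pow_of_isCoprime hx hef

theorem succ_le_pow_mul_pred {p a b : ℕ} (hp : 2 ≤ p) (hab : a ≤ b) :
    a + 1 ≤ p ^ b * (p - 1) :=
  calc
    a + 1 ≤ b + 1 := Nat.succ_le_succ hab
    _ ≤ p ^ b := Nat.lt_pow_self hp
    _ ≤ p ^ b * (p - 1) := Nat.le_mul_of_pos_right _ (Nat.sub_pos_of_lt hp)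

theorem pow_mul_pred_modEq_totient {p a b : ℕ} (hp : p.Prime) (hab : a ≤ b) :
    p ^ a * (p - 1) ≡ p ^ b * (p - 1) [MOD (p ^ (a + 1)).totient] := by
  have hdvd : p ^ a * (p - 1) ∣ p ^ b * (p - 1) := Nat.mul_dvd_mul_right (pow_dvd_pow p hab) _
  rw [Nat.totient_prime_pow_succ hp]
  exact (Nat.modEq_zero_iff_dvd.2 dvd_rfl).trans (Nat.modEq_zero_iff_dvd.2 hdvd).symm

theorem stirling_congruence_general {p k e f : ℕ} (hp : p.Prime) (hke : k ≤ e) (hkf : k ≤ f)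
    (hef : e ≡ f [MOD (p ^ k).totient]) (n : ℕ) :
    (∑ j ∈ Finset.range (n + 1), (n.choose j : ℤ) * (-1) ^ (n + j) * ((j : ℤ) + 1) ^ e) ≡
    (∑ j ∈ Finset.range (n + 1), (n.choose j : ℤ) * (-1) ^ (n + j) * ((j : ℤ) + 1) ^ f)
      [ZMOD (p : ℤ) ^ k] :=
  Int.ModEq.sum fun j _ =>
    (int_pow_modEq_pow_of_modEq_totient hp hke hkf hef (j + 1)).mul_left _

/-- The core congruence of Lemma 3.6:
`n!·S_r^{(n+1)} ≡ n!·S_s^{(n+1)} (mod p^{a+1})` for `r = p^a(p−1)+l`, `s = p^b(p−1)+l`. -/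
theorem stirling_congruence
    (p : ℕ) (hp : p.Prime) (hodd : p ≠ 2) (l n : ℕ) (hl : 1 ≤ l)
    (a b : ℕ) (hab : a ≤ b) (r s : ℕ)
    (hr : r = p ^ a * (p - 1) + l) (hs : s = p ^ b * (p - 1) + l) :
    (∑ j ∈ Finset.range (n + 1),
        (n.choose j : ℤ) * (-1) ^ (n + j) * ((j : ℤ) + 1) ^ (r - 1)) ≡
    (∑ j ∈ Finset.range (n + 1),
        (n.choose j : ℤ) * (-1) ^ (n + j) * ((j : ℤ) + 1) ^ (s - 1))
      [ZMOD ((p : ℤ) ^ (a + 1))] := by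
  rw [hr, hs, Nat.add_sub_assoc hl, Nat.add_sub_assoc hl]
  exact stirling_congruence_general hp
    (Nat.le_add_right_of_le (succ_le_pow_mul_pred hp.two_le le_rfl))
    (Nat.le_add_right_of_le (succ_le_pow_mul_pred hp.two_le hab))
    ((pow_mul_pred_modEq_totient hp hab).add_right _) n
end

section
/- Let p ≥ 5 be a prime, let l ≥ 1 be an odd integer with l ≢ −1 (mod p−1), let 0 ≤ a ≤ b be integers, and set r = p^a(p−1) + l and s = p^b(p−1) + l. Then |(1−p^r)·B_{r+1}/(r+1) − (1−p^s)·B_{s+1}/(s+1)|_p ≤ p^{−(a+1)}, where |·|_p is the p-adic absolute value on ℚ. -/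
/-!
For `c` prime to `n`, multiplication by `c` permutes the residues `j` prime to `n`. Writing
`c * j = n * ⌊c j / n⌋ + (c j mod n)` and expanding the `(m + 1)`-st powers to first order in `n`
yields Voronoi's congruence
`(c ^ (m + 1) - 1) * ∑ j ^ (m + 1) ≡ (m + 1) * n * ∑ ⌊c j / n⌋ * (c j mod n) ^ m  (mod n ^ 2)`.
For `n = p ^ k`, divide by `(m + 1) * n` and let `k → ∞`: by Faulhaber's formula the left-hand side
tends `p`-adically to `(c ^ (m + 1) - 1) * (1 - p ^ m) * B_{m + 1} / (m + 1)`, which is therefore a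
limit of the integers `∑ ⌊c j / n⌋ * (c j mod n) ^ m`. By Euler's theorem these integers, as well as
`c ^ (m + 1)`, depend modulo `p ^ (a + 1)` only on `m` modulo `p ^ a * (p - 1)`. Choosing for `c` a
primitive root modulo `p` makes `c ^ (m + 1) - 1` a `p`-adic unit, so it can be cancelled.
-/

open Filter Finset Topology

theorem pow_modEq_pow_of_modEq_totient {x d m n : ℕ} (hx : x.Coprime d)
    (hmn : m ≡ n [MOD d.totient]) : x ^ m ≡ x ^ n [MOD d] := by
  have order_dvd : orderOf (ZMod.unitOfCoprime x hx) ∣ d.totient :=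
    orderOf_dvd_of_pow_eq_one (ZMod.pow_totient _)
  have units_eq := congrArg Units.val (pow_eq_pow_iff_modEq.2 (hmn.of_dvd order_dvd))
  rw [← ZMod.natCast_eq_natCast_iff]
  simpa using units_eq

theorem natCast_modEq_neg_one_iff_sub_one_dvd {p : ℕ} (hp : 1 ≤ p) (m : ℕ) :
    (m : ℤ) ≡ -1 [ZMOD (p : ℤ) - 1] ↔ p - 1 ∣ m + 1 := by
  rw [Int.modEq_comm, Int.modEq_iff_dvd, sub_neg_eq_add, ← Int.natCast_dvd_natCast]
  push_cast [hp]
  rfl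

theorem pow_mul_add_modEq {p a b : ℕ} (hab : a ≤ b) (q l : ℕ) :
    p ^ b * q + l ≡ l [MOD p ^ a * q] := by
  have dvd : p ^ a * q ∣ p ^ b * q := mul_dvd_mul_right (pow_dvd_pow p hab) q
  simpa using (Nat.modEq_zero_iff_dvd.2 dvd).add_right l

theorem sum_filter_dvd_range_mul {M : Type*} [AddCommMonoid M] {d : ℕ} (hd : 0 < d) (n : ℕ)
    (f : ℕ → M) : ∑ j ∈ range (d * n) with d ∣ j, f j = ∑ j ∈ range n, f (d * j) := by
  have multiples : {j ∈ range (d * n) | d ∣ j} = (range n).image (d * ·) := by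
    ext j
    simp only [mem_filter, mem_range, mem_image]
    constructor
    · rintro ⟨hj, i, rfl⟩
      exact ⟨i, Nat.lt_of_mul_lt_mul_left hj, rfl⟩
    · rintro ⟨i, hi, rfl⟩
      exact ⟨Nat.mul_lt_mul_of_pos_left hi hd, dvd_mul_right d i⟩
  rw [multiples, sum_image fun i _ j _ hij => Nat.eq_of_mul_eq_mul_left hd hij]

theorem norm_sub_le_of_norm_mul_sub_mul_le {K : Type*} [NormedRing K] [NormMulClass K]
    [IsUltrametricDist K] {u v x y : K} {ε : ℝ} (hv : ‖v‖ = 1) (hx : ‖x‖ ≤ 1)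
    (huv : ‖u - v‖ ≤ ε) (huxvy : ‖u * x - v * y‖ ≤ ε) : ‖x - y‖ ≤ ε := by
  calc ‖x - y‖ = ‖v * (x - y)‖ := by rw [norm_mul, hv, one_mul]
    _ = ‖(u * x - v * y) - (u - v) * x‖ := by congr 1; noncomm_ring
    _ ≤ max ‖u * x - v * y‖ ‖(u - v) * x‖ := by
      simpa only [sub_eq_add_neg, norm_neg] using
        IsUltrametricDist.norm_add_le_max (u * x - v * y) (-((u - v) * x))
    _ ≤ ε := max_le huxvy <| by
      rw [norm_mul]
      exact (mul_le_of_le_one_right (norm_nonneg _) hx).trans huv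

theorem norm_intCast_sub_le_of_modEq {p : ℕ} [Fact p.Prime] {x y : ℤ} {k : ℕ}
    (hxy : x ≡ y [ZMOD (p : ℤ) ^ k]) : ‖(x : ℚ_[p]) - y‖ ≤ (p : ℝ) ^ (-(k : ℤ)) := by
  rw [← Int.cast_sub, Padic.norm_int_le_pow_iff_dvd]
  exact_mod_cast hxy.symm.dvd

theorem exists_coprime_forall_norm_pow_sub_one_eq_one (p : ℕ) [Fact p.Prime] :
    ∃ c : ℕ, p.Coprime c ∧ ∀ m : ℕ, ¬ p - 1 ∣ m → ‖(c : ℚ_[p]) ^ m - 1‖ = 1 := by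
  obtain ⟨g, order_g⟩ := IsCyclic.exists_ofOrder_eq_natCard (α := (ZMod p)ˣ)
  rw [Nat.card_eq_fintype_card, ZMod.card_units] at order_g
  refine ⟨(g : ZMod p).val, (ZMod.val_coe_unit_coprime g).symm, fun m hm => ?_⟩
  have not_dvd : ¬ (p : ℤ) ∣ ((g : ZMod p).val : ℤ) ^ m - 1 := by
    rw [← ZMod.intCast_zmod_eq_zero_iff_dvd]
    push_cast
    rw [ZMod.natCast_zmod_val, sub_eq_zero]
    exact fun pow_eq => hm (order_g ▸ orderOf_dvd_of_pow_eq_one (Units.ext (by simpa using pow_eq)))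
  have norm_not_lt := mt Padic.norm_intCast_lt_one_iff.1 not_dvd
  have norm_le := Padic.norm_int_le_one (p := p) (((g : ZMod p).val : ℤ) ^ m - 1)
  simpa using le_antisymm norm_le (not_lt.1 norm_not_lt)

theorem sum_range_pow_div_eq {n : ℕ} (hn : n ≠ 0) (m : ℕ) :
    (∑ j ∈ range n, (j : ℚ) ^ m) / n =
      ∑ i ∈ range (m + 1), bernoulli i * (m + 1).choose i / (m + 1) * (n : ℚ) ^ (m - i) := by
  rw [sum_range_pow, sum_div]
  refine sum_congr rfl fun i hi => ?_
  rw [Nat.sub_add_comm (mem_range_succ_iff.1 hi), pow_succ]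
  field_simp

theorem tendsto_sum_range_pow_div {K ι : Type*} [Field K] [CharZero K] [TopologicalSpace K]
    [IsTopologicalRing K] {F : Filter ι} {N : ι → ℕ} (hN : ∀ᶠ i in F, N i ≠ 0)
    (hN_tendsto : Tendsto (fun i => (N i : K)) F (𝓝 0)) (m : ℕ) :
    Tendsto (fun i => (∑ j ∈ range (N i), (j : K) ^ m) / N i) F (𝓝 (bernoulli m : K)) := by
  let faulhaber (x : K) : K :=
    ∑ i ∈ range (m + 1), ((bernoulli i * (m + 1).choose i / (m + 1) : ℚ) : K) * x ^ (m - i)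
  have faulhaber_zero : faulhaber 0 = bernoulli m := by
    have hm : (m : ℚ) + 1 ≠ 0 := by positivity
    have vanish : ∀ i ∈ range m,
        ((bernoulli i * (m + 1).choose i / (m + 1) : ℚ) : K) * 0 ^ (m - i) = 0 := fun i hi => by
      rw [zero_pow (Nat.sub_pos_of_lt (mem_range.1 hi)).ne', mul_zero]
    simp only [faulhaber]
    rw [sum_range_succ, sum_eq_zero vanish, zero_add, Nat.sub_self, pow_zero, mul_one,
      Nat.choose_succ_self_right, Nat.cast_succ, mul_div_cancel_right₀ _ hm]
  have faulhaber_continuous : Continuous faulhaber := by fun_prop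
  rw [← faulhaber_zero]
  refine ((faulhaber_continuous.tendsto 0).comp hN_tendsto).congr' ?_
  filter_upwards [hN] with i hi
  simpa [faulhaber] using (congrArg (Rat.cast : ℚ → K) (sum_range_pow_div_eq hi m)).symm

/-- The least non-negative representatives of the residue classes modulo `n` that are prime
to `n`. -/
def coprimeResidues (n : ℕ) : Finset ℕ := {j ∈ range n | n.Coprime j}

/-- The sum `∑ ⌊c j / n⌋ * (c j mod n) ^ m` over the residues `j` prime to `n`, which occurs in
Voronoi's congruence. The quotient and the remainder are those of `ℕ`. -/
def voronoiSum (n c m : ℕ) : ℤ :=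
  ∑ j ∈ coprimeResidues n, ((c * j / n : ℕ) : ℤ) * ((c * j % n : ℕ) : ℤ) ^ m

/-- The number `(1 - p ^ m) * B_{m + 1} / (m + 1)`. For `m ≥ 1` it is the value at `-m` of
`-ζ` with the Euler factor at `p` removed. -/
def stabilizedBernoulli (p m : ℕ) : ℚ :=
  (1 - (p : ℚ) ^ m) * bernoulli (m + 1) / ((m : ℚ) + 1)

theorem coprime_mul_mod {n c j : ℕ} (hc : n.Coprime c) (hj : j ∈ coprimeResidues n) :
    n.Coprime (c * j % n) := by
  have coprime_mul : n.Coprime (c * j) := hc.mul_right (mem_filter.1 hj).2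
  rwa [Nat.Coprime, Nat.gcd_comm, ← Nat.gcd_rec]

theorem sum_coprimeResidues_mul_mod {M : Type*} [AddCommMonoid M] {n c : ℕ} (hc : n.Coprime c)
    (f : ℕ → M) :
    ∑ j ∈ coprimeResidues n, f (c * j % n) = ∑ j ∈ coprimeResidues n, f j := by
  have lt_of_mem {j : ℕ} (hj : j ∈ coprimeResidues n) : j < n := mem_range.1 (mem_filter.1 hj).1
  have maps : ∀ j ∈ coprimeResidues n, c * j % n ∈ coprimeResidues n := fun j hj =>
    mem_filter.2 ⟨mem_range.2 (Nat.mod_lt _ (Nat.zero_lt_of_lt (lt_of_mem hj))),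
      coprime_mul_mod hc hj⟩
  have inj : Set.InjOn (fun j => c * j % n) (coprimeResidues n) := fun i hi j hj hij =>
    (Nat.ModEq.cancel_left_of_coprime hc hij).eq_of_lt_of_lt (lt_of_mem hi) (lt_of_mem hj)
  exact sum_nbij (fun j => c * j % n) maps inj
    (surjOn_of_injOn_of_card_le _ maps inj le_rfl) fun _ _ => rfl

theorem sum_coprimeResidues_prime_pow_succ {M : Type*} [AddCommGroup M] {p : ℕ} (hp : p.Prime)
    (k : ℕ) (f : ℕ → M) :
    ∑ j ∈ coprimeResidues (p ^ (k + 1)), f j =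
      ∑ j ∈ range (p ^ (k + 1)), f j - ∑ j ∈ range (p ^ k), f (p * j) := by
  have coprime_iff (j : ℕ) : (p ^ (k + 1)).Coprime j ↔ ¬ p ∣ j := by
    rw [Nat.coprime_pow_left_iff k.succ_pos, hp.coprime_iff_not_dvd]
  rw [eq_sub_iff_add_eq', ← sum_filter_dvd_range_mul hp.pos, ← pow_succ']
  simp only [coprimeResidues, coprime_iff]
  exact sum_filter_add_sum_filter_not _ _ _

theorem voronoi_congruence {n c : ℕ} (hc : n.Coprime c) (m : ℕ) :
    ((c : ℤ) ^ (m + 1) - 1) * ∑ j ∈ coprimeResidues n, (j : ℤ) ^ (m + 1) ≡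
      (m + 1) * n * voronoiSum n c m [ZMOD (n : ℤ) ^ 2] := by
  have expand (j : ℕ) : ((c * j : ℕ) : ℤ) ^ (m + 1) ≡
      ((c * j % n : ℕ) : ℤ) ^ (m + 1) +
        (m + 1) * n * (((c * j / n : ℕ) : ℤ) * ((c * j % n : ℕ) : ℤ) ^ m) [ZMOD (n : ℤ) ^ 2] := by
    obtain ⟨z, hz⟩ := Polynomial.powAddExpansion ((c * j % n : ℕ) : ℤ) (n * (c * j / n : ℕ)) (m + 1)
    have div_add_mod : ((c * j : ℕ) : ℤ) = (c * j % n : ℕ) + n * (c * j / n : ℕ) :=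
      mod_cast (Nat.mod_add_div (c * j) n).symm
    rw [div_add_mod, hz]
    refine (Int.modEq_iff_dvd.2 ⟨z * (c * j / n : ℕ) ^ 2, ?_⟩).symm
    push_cast [Nat.add_sub_cancel]
    ring
  have expand_sum := Int.ModEq.sum (s := coprimeResidues n) fun j _ => expand j
  rw [sum_add_distrib, sum_coprimeResidues_mul_mod hc fun j => (j : ℤ) ^ (m + 1), ← mul_sum]
    at expand_sum
  simp only [Nat.cast_mul, mul_pow, ← mul_sum] at expand_sum
  rw [sub_mul, one_mul]
  simpa [voronoiSum] using expand_sum.sub_right (∑ j ∈ coprimeResidues n, (j : ℤ) ^ (m + 1))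

theorem voronoiSum_modEq {n c d m m' : ℕ} (hc : n.Coprime c) (hd : d ∣ n)
    (hm : m ≡ m' [MOD d.totient]) : voronoiSum n c m ≡ voronoiSum n c m' [ZMOD d] := by
  refine Int.ModEq.sum fun j hj => Int.ModEq.mul_left _ ?_
  have coprime_d : (c * j % n).Coprime d := ((coprime_mul_mod hc hj).coprime_dvd_left hd).symm
  exact_mod_cast Int.natCast_modEq_iff.2 (pow_modEq_pow_of_modEq_totient coprime_d hm)

section Padic

variable {p : ℕ} [Fact p.Prime]

theorem tendsto_sum_coprimeResidues_pow_div (m : ℕ) :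
    Tendsto (fun k => (∑ j ∈ coprimeResidues (p ^ k), (j : ℚ_[p]) ^ (m + 1)) / (p : ℚ_[p]) ^ k)
      atTop (𝓝 ((1 - (p : ℚ_[p]) ^ m) * (bernoulli (m + 1) : ℚ_[p]))) := by
  have hp : p.Prime := Fact.out
  have p_ne_zero : (p : ℚ_[p]) ≠ 0 := mod_cast hp.ne_zero
  have full_sum : Tendsto (fun k => (∑ j ∈ range (p ^ k), (j : ℚ_[p]) ^ (m + 1)) / (p : ℚ_[p]) ^ k)
      atTop (𝓝 (bernoulli (m + 1) : ℚ_[p])) := by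
    have pow_tendsto : Tendsto (fun k => ((p ^ k : ℕ) : ℚ_[p])) atTop (𝓝 0) := by
      simpa using tendsto_pow_atTop_nhds_zero_of_norm_lt_one (Padic.norm_p_lt_one (p := p))
    have prime_pow_ne_zero : ∀ᶠ k in atTop, p ^ k ≠ 0 :=
      .of_forall fun k => pow_ne_zero k hp.ne_zero
    simpa using tendsto_sum_range_pow_div prime_pow_ne_zero pow_tendsto (m + 1)
  rw [← tendsto_add_atTop_iff_nat 1, sub_mul, one_mul]
  refine (((tendsto_add_atTop_iff_nat 1).2 full_sum).sub
    (full_sum.const_mul ((p : ℚ_[p]) ^ m))).congr fun k => ?_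
  rw [sum_coprimeResidues_prime_pow_succ hp]
  simp only [Nat.cast_mul, mul_pow, ← mul_sum]
  field_simp
  ring

theorem tendsto_voronoiSum {c : ℕ} (hc : p.Coprime c) (m : ℕ) :
    Tendsto (fun k => (voronoiSum (p ^ k) c m : ℚ_[p])) atTop
      (𝓝 (((c : ℚ_[p]) ^ (m + 1) - 1) * (stabilizedBernoulli p m : ℚ_[p]))) := by
  have p_ne_zero : (p : ℚ_[p]) ≠ 0 := mod_cast (Fact.out : p.Prime).ne_zero
  have m_ne_zero : (m : ℚ_[p]) + 1 ≠ 0 := mod_cast m.succ_ne_zero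
  choose e he using fun k => (voronoi_congruence (hc.pow_left k) m).dvd
  have error_tendsto : Tendsto (fun k => (p : ℚ_[p]) ^ k * e k) atTop (𝓝 0) := by
    refine squeeze_zero_norm (a := fun k => ‖(p : ℚ_[p])‖ ^ k) (fun k => ?_)
      (tendsto_pow_atTop_nhds_zero_of_lt_one (norm_nonneg _) Padic.norm_p_lt_one)
    rw [norm_mul, norm_pow]
    exact mul_le_of_le_one_right (by positivity) (Padic.norm_int_le_one _)
  have limit := (((tendsto_sum_coprimeResidues_pow_div (p := p) m).const_mul
    ((c : ℚ_[p]) ^ (m + 1) - 1)).add error_tendsto).div_const ((m : ℚ_[p]) + 1)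
  rw [add_zero, mul_div_assoc] at limit
  convert limit using 2 with k
  · have voronoi := congrArg (Int.cast : ℤ → ℚ_[p]) (he k)
    push_cast at voronoi
    field_simp
    linear_combination voronoi
  · simp [stabilizedBernoulli]

theorem norm_stabilizedBernoulli_le_one {m : ℕ} (hm : ¬ p - 1 ∣ m + 1) :
    ‖(stabilizedBernoulli p m : ℚ_[p])‖ ≤ 1 := by
  obtain ⟨c, hc, norm_pow_sub_one⟩ := exists_coprime_forall_norm_pow_sub_one_eq_one p
  have limit_le := le_of_tendsto (tendsto_voronoiSum hc m).norm
    (Eventually.of_forall fun _ => Padic.norm_int_le_one _)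
  rwa [norm_mul, norm_pow_sub_one _ hm, one_mul] at limit_le

theorem norm_mul_stabilizedBernoulli_sub_le {c m n a : ℕ} (hc : p.Coprime c)
    (hmn : m ≡ n [MOD (p ^ a).totient]) :
    ‖((c : ℚ_[p]) ^ (m + 1) - 1) * (stabilizedBernoulli p m : ℚ_[p]) -
      ((c : ℚ_[p]) ^ (n + 1) - 1) * (stabilizedBernoulli p n : ℚ_[p])‖ ≤ (p : ℝ) ^ (-(a : ℤ)) := by
  refine le_of_tendsto ((tendsto_voronoiSum hc m).sub (tendsto_voronoiSum hc n)).norm ?_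
  filter_upwards [eventually_ge_atTop a] with k hk
  exact norm_intCast_sub_le_of_modEq
    (mod_cast voronoiSum_modEq (hc.pow_left k) (pow_dvd_pow p hk) hmn)

theorem norm_stabilizedBernoulli_sub_le {m n a : ℕ} (hm : ¬ p - 1 ∣ m + 1)
    (hmn : m ≡ n [MOD p ^ a * (p - 1)]) :
    ‖(stabilizedBernoulli p m : ℚ_[p]) - (stabilizedBernoulli p n : ℚ_[p])‖ ≤
      (p : ℝ) ^ (-((a : ℤ) + 1)) := by
  obtain ⟨c, hc, norm_pow_sub_one⟩ := exists_coprime_forall_norm_pow_sub_one_eq_one p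
  have hn : ¬ p - 1 ∣ n + 1 := by
    rwa [← ((hmn.of_dvd (dvd_mul_left _ _)).add_right 1).dvd_iff dvd_rfl]
  rw [← Nat.totient_prime_pow_succ Fact.out] at hmn
  have pow_close : ‖((c : ℚ_[p]) ^ (m + 1) - 1) - ((c : ℚ_[p]) ^ (n + 1) - 1)‖ ≤
      (p : ℝ) ^ (-((a + 1 : ℕ) : ℤ)) := by
    have euler := pow_modEq_pow_of_modEq_totient (hc.pow_left (a + 1)).symm (hmn.add_right 1)
    rw [sub_sub_sub_cancel_right]
    have euler_int : ((c ^ (m + 1) : ℕ) : ℤ) ≡ (c ^ (n + 1) : ℕ) [ZMOD (p : ℤ) ^ (a + 1)] := by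
      simpa using Int.natCast_modEq_iff.2 euler
    exact_mod_cast norm_intCast_sub_le_of_modEq euler_int
  exact_mod_cast norm_sub_le_of_norm_mul_sub_mul_le (norm_pow_sub_one _ hn)
    (norm_stabilizedBernoulli_le_one hm) pow_close (norm_mul_stabilizedBernoulli_sub_le hc hmn)

end Padic

theorem bernoulli_kummer_estimate_general {p : ℕ} (hp : p.Prime) {a m n : ℕ}
    (hm : ¬ p - 1 ∣ m + 1) (hmn : m ≡ n [MOD p ^ a * (p - 1)]) :
    padicNorm p
        ((1 - (p : ℚ) ^ m) * bernoulli (m + 1) / ((m : ℚ) + 1)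
          - (1 - (p : ℚ) ^ n) * bernoulli (n + 1) / ((n : ℚ) + 1))
      ≤ (p : ℚ) ^ (-((a : ℤ) + 1)) := by
  have : Fact p.Prime := ⟨hp⟩
  have estimate := norm_stabilizedBernoulli_sub_le hm hmn
  rw [← Rat.cast_sub, Padic.eq_padicNorm, ← Rat.cast_natCast, ← Rat.cast_zpow] at estimate
  exact Rat.cast_le.1 estimate

/-- Lemma 3.7: via Kummer's congruences,
`|(1−p^r)B_{r+1}/(r+1) − (1−p^s)B_{s+1}/(s+1)|_p ≤ p^{−(a+1)}`
for `r = p^a(p−1)+l`, `s = p^b(p−1)+l`, `l ≥ 1` odd with `l ≢ −1 (mod p−1)`. -/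
theorem bernoulli_kummer_estimate
    (p : ℕ) (hp : p.Prime) (hp5 : 5 ≤ p)
    (l : ℕ) (hl : 1 ≤ l) (hlodd : Odd l)
    (hlne : ¬ ((l : ℤ) ≡ -1 [ZMOD ((p : ℤ) - 1)]))
    (a b : ℕ) (hab : a ≤ b) (r s : ℕ)
    (hr : r = p ^ a * (p - 1) + l) (hs : s = p ^ b * (p - 1) + l) :
    padicNorm p
        ((1 - (p : ℚ) ^ r) * bernoulli (r + 1) / ((r : ℚ) + 1)
          - (1 - (p : ℚ) ^ s) * bernoulli (s + 1) / ((s : ℚ) + 1))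
      ≤ (p : ℚ) ^ (-((a : ℤ) + 1)) := by
  subst hr hs
  refine bernoulli_kummer_estimate_general hp ?_
    ((pow_mul_add_modEq le_rfl _ l).trans (pow_mul_add_modEq hab _ l).symm)
  rwa [add_assoc, Nat.dvd_add_right (dvd_mul_left _ _),
    ← natCast_modEq_neg_one_iff_sub_one_dvd hp.one_le]
end

section
/- Let R be a commutative ring and let c, g ∈ R. Define F : ℕ → R by F(0) = 1, F(1) = c, and F(t) = c·F(t−1) + 2(t−1)·g·F(t−2) for t ≥ 2. Then for every t ≥ 0, F(t) = Σ_{k=0}^{⌊t/2⌋} C(t,2k) · ((2k)!/k!) · c^{t−2k} · g^k, where (2k)!/k! denotes the integer 2^k·(2k−1)!!. -/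
/-! The sums on the right-hand side are the two-variable Hermite polynomials `H_t(c, g)`: the
`k`-th coefficient counts the ways to choose `k` disjoint pairs among `t` points, each pair
weighted by `2`. Removing one point, which is either unpaired (factor `c`) or paired with one of
the `t - 1` others (factor `2 g` each), gives the same recursion as the one defining `F`. -/

open Finset
open scoped Nat

/-- The coefficient `C(t, 2k) · (2k)! / k!` of `c ^ (t - 2k) g ^ k` in the two-variable Hermite
polynomial of index `t`. The quotient `(2k)! / k!` is encoded as `2 ^ k (2k - 1)‼`; at `k = 0` the
truncated subtraction gives `0‼ = 1`, the usual value of `(-1)‼`. -/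
def bivariateHermiteCoeff (t k : ℕ) : ℕ :=
  t.choose (2 * k) * (2 ^ k * (2 * k - 1)‼)

theorem bivariateHermiteCoeff_zero_right (t : ℕ) : bivariateHermiteCoeff t 0 = 1 := by
  simp [bivariateHermiteCoeff]

theorem bivariateHermiteCoeff_eq_zero_of_lt {t k : ℕ} (h : t < 2 * k) :
    bivariateHermiteCoeff t k = 0 := by
  rw [bivariateHermiteCoeff, Nat.choose_eq_zero_of_lt h, zero_mul]

theorem bivariateHermiteCoeff_add_two_add_one (n k : ℕ) :
    bivariateHermiteCoeff (n + 2) (k + 1) =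
      bivariateHermiteCoeff (n + 1) (k + 1) + 2 * (n + 1) * bivariateHermiteCoeff n k := by
  have pascal : (n + 2).choose (2 * (k + 1)) =
      (n + 1).choose (2 * k + 1) + (n + 1).choose (2 * (k + 1)) :=
    Nat.choose_succ_succ' (n + 1) (2 * k + 1)
  have absorption : (n + 1) * n.choose (2 * k) = (n + 1).choose (2 * k + 1) * (2 * k + 1) :=
    Nat.add_one_mul_choose_eq n (2 * k)
  have odd_doubleFactorial : (2 * (k + 1) - 1)‼ = (2 * k + 1) * (2 * k - 1)‼ :=
    Nat.doubleFactorial_add_one (2 * k)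
  simp only [bivariateHermiteCoeff, pascal, odd_doubleFactorial]
  linear_combination (2 * 2 ^ k * (2 * k - 1)‼) * absorption.symm

section CommSemiring

variable {R : Type*} [CommSemiring R] (c g : R)

/-- The two-variable (Kampé de Fériet) Hermite polynomial
`H_t(c, g) = t! ∑ₖ c ^ (t - 2k) g ^ k / ((t - 2k)! k!)`, written with natural number coefficients
so that it makes sense over any commutative semiring. -/
def bivariateHermite (t : ℕ) : R :=
  ∑ k ∈ range (t / 2 + 1), (bivariateHermiteCoeff t k : R) * c ^ (t - 2 * k) * g ^ k

theorem bivariateHermite_zero : bivariateHermite c g 0 = 1 := by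
  simp [bivariateHermite, bivariateHermiteCoeff_zero_right]

theorem bivariateHermite_one : bivariateHermite c g 1 = c := by
  simp [bivariateHermite, bivariateHermiteCoeff_zero_right]

theorem bivariateHermite_eq_sum_range {t N : ℕ} (h : t < 2 * N) :
    bivariateHermite c g t =
      ∑ k ∈ range N, (bivariateHermiteCoeff t k : R) * c ^ (t - 2 * k) * g ^ k := by
  refine sum_subset (range_mono (by omega)) fun k _ hk ↦ ?_
  have hlt : t < 2 * k := by
    rw [mem_range] at hk
    omega
  simp [bivariateHermiteCoeff_eq_zero_of_lt hlt]

theorem bivariateHermiteCoeff_mul_pow_add_one_sub (t k : ℕ) :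
    (bivariateHermiteCoeff t k : R) * c ^ (t + 1 - 2 * k) =
      c * ((bivariateHermiteCoeff t k : R) * c ^ (t - 2 * k)) := by
  rcases lt_or_ge t (2 * k) with hlt | hle
  · simp [bivariateHermiteCoeff_eq_zero_of_lt hlt]
  · rw [Nat.sub_add_comm hle, pow_succ]
    ring

theorem bivariateHermite_term_add_two_add_one (n k : ℕ) :
    (bivariateHermiteCoeff (n + 2) (k + 1) : R) * c ^ (n + 2 - 2 * (k + 1)) * g ^ (k + 1) =
      c * ((bivariateHermiteCoeff (n + 1) (k + 1) : R) * c ^ (n + 1 - 2 * (k + 1)) *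
        g ^ (k + 1)) +
      2 * ((n + 1 : ℕ) : R) * g * ((bivariateHermiteCoeff n k : R) * c ^ (n - 2 * k) * g ^ k) := by
  have exponent : n + 2 - 2 * (k + 1) = n - 2 * k := by omega
  have unpaired : (bivariateHermiteCoeff (n + 1) (k + 1) : R) * c ^ (n - 2 * k) =
      c * ((bivariateHermiteCoeff (n + 1) (k + 1) : R) * c ^ (n + 1 - 2 * (k + 1))) := by
    rw [← bivariateHermiteCoeff_mul_pow_add_one_sub, exponent]
  rw [exponent, bivariateHermiteCoeff_add_two_add_one, Nat.cast_add, add_mul, unpaired]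
  push_cast
  ring

theorem bivariateHermite_add_two (n : ℕ) :
    bivariateHermite c g (n + 2) =
      c * bivariateHermite c g (n + 1) + 2 * ((n + 1 : ℕ) : R) * g * bivariateHermite c g n := by
  rw [bivariateHermite_eq_sum_range c g (show n + 2 < 2 * (n + 2) by omega),
    bivariateHermite_eq_sum_range c g (show n + 1 < 2 * (n + 2) by omega),
    bivariateHermite_eq_sum_range c g (show n < 2 * (n + 1) by omega),
    sum_range_succ', sum_range_succ' _ (n + 1)]
  simp only [bivariateHermite_term_add_two_add_one, sum_add_distrib, ← mul_sum,
    bivariateHermiteCoeff_zero_right, mul_zero, Nat.sub_zero]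
  ring

end CommSemiring

theorem lattice_character_recursion_closed_form_general
    {R : Type*} [CommSemiring R] (c g : R) (F : ℕ → R)
    (hF0 : F 0 = 1) (hF1 : F 1 = c)
    (hFt : ∀ t : ℕ, 2 ≤ t →
      F t = c * F (t - 1) + 2 * ((t - 1 : ℕ) : R) * g * F (t - 2)) (t : ℕ) :
    F t = ∑ k ∈ range (t / 2 + 1),
      (t.choose (2 * k) : R) * ((2 ^ k * (2 * k - 1)‼ : ℕ) : R) * c ^ (t - 2 * k) * g ^ k := by
  suffices F t = bivariateHermite c g t by
    simpa only [bivariateHermite, bivariateHermiteCoeff, Nat.cast_mul] using this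
  induction t using Nat.twoStepInduction with
  | zero => rw [hF0, bivariateHermite_zero]
  | one => rw [hF1, bivariateHermite_one]
  | more n ih ih_succ =>
    have recursion : F (n + 2) = c * F (n + 1) + 2 * ((n + 1 : ℕ) : R) * g * F n :=
      hFt (n + 2) (Nat.le_add_left 2 n)
    rw [recursion, ih, ih_succ, bivariateHermite_add_two]

/-- The inductive content of Lemma 4.2: the solution of the recursion
`F(t) = c·F(t−1) + 2(t−1)·g·F(t−2)`, `F(0) = 1`, `F(1) = c`, is
`F(t) = ∑_{k=0}^{⌊t/2⌋} C(t,2k)·(2k)!/k!·c^{t−2k}·g^k`, where `(2k)!/k! = 2^k(2k−1)!!`. -/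
theorem lattice_character_recursion_closed_form
    {R : Type*} [CommRing R] (c g : R) (F : ℕ → R)
    (hF0 : F 0 = 1) (hF1 : F 1 = c)
    (hFt : ∀ t : ℕ, 2 ≤ t →
      F t = c * F (t - 1) + 2 * ((t - 1 : ℕ) : R) * g * F (t - 2)) :
    ∀ t : ℕ, F t = ∑ k ∈ Finset.range (t / 2 + 1),
      (t.choose (2 * k) : R) * ((2 ^ k * Nat.doubleFactorial (2 * k - 1) : ℕ) : R) *
        c ^ (t - 2 * k) * g ^ k :=
  lattice_character_recursion_closed_form_general c g F hF0 hF1 hFt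
end

section
/- Let p be a prime and let l ≥ 1 and n ≥ 1 be integers. Then, in the ring ℤ_p of p-adic integers, the sequence a ↦ Σ_{d ∣ n} d^{p^a(p−1)+l} converges as a → ∞ to σ_l^⋆(n) := Σ_{d ∣ n, p ∤ d} d^l. -/
/-!
Fermat's little theorem gives `x ^ (p - 1) ≡ 1 [mod p]` for a unit `x` of `ℤ_[p]`, and raising a
congruence modulo `p` to the power `p ^ a` improves it to one modulo `p ^ (a + 1)`. Hence
`x ^ (p ^ a * (p - 1))` tends to `1` when `x` is a unit and to `0` when it is not, so in the limit
only the units contribute to a power sum; an integer `d` is a unit of `ℤ_[p]` exactly when `p ∤ d`.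
-/

open Filter Topology

section PadicPowers

variable {p : ℕ} [hp : Fact p.Prime]

theorem padicInt_isUnit_natCast_iff {d : ℕ} : IsUnit (d : ℤ_[p]) ↔ ¬ p ∣ d := by
  rw [PadicInt.isUnit_iff, PadicInt.norm_natCast_eq_one_iff, hp.out.coprime_iff_not_dvd]

theorem padicInt_dvd_iff_toZMod_eq_zero {x : ℤ_[p]} :
    (p : ℤ_[p]) ∣ x ↔ PadicInt.toZMod x = 0 := by
  rw [← RingHom.mem_ker, PadicInt.ker_toZMod, PadicInt.maximalIdeal_eq_span_p,
    Ideal.mem_span_singleton]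

theorem padicInt_dvd_pow_sub_one_of_isUnit {x : ℤ_[p]} (hx : IsUnit x) :
    (p : ℤ_[p]) ∣ x ^ (p - 1) - 1 := by
  have fermat : PadicInt.toZMod x ^ (p - 1) = 1 :=
    ZMod.pow_card_sub_one_eq_one (hx.map PadicInt.toZMod).ne_zero
  rw [padicInt_dvd_iff_toZMod_eq_zero, map_sub, map_pow, map_one, fermat, sub_self]

theorem padicInt_norm_pow_prime_pow_sub_le_of_dvd_sub {x y : ℤ_[p]} (hxy : (p : ℤ_[p]) ∣ x - y)
    (a : ℕ) : ‖x ^ p ^ a - y ^ p ^ a‖ ≤ ‖(p : ℤ_[p])‖ ^ (a + 1) := by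
  obtain ⟨c, hc⟩ := dvd_sub_pow_of_dvd_sub hxy a
  rw [hc, norm_mul, norm_pow]
  exact mul_le_of_le_one_right (by positivity) (PadicInt.norm_le_one c)

theorem padicInt_tendsto_pow_prime_pow_sub_of_dvd_sub {x y : ℤ_[p]} (hxy : (p : ℤ_[p]) ∣ x - y) :
    Tendsto (fun a : ℕ => x ^ p ^ a - y ^ p ^ a) atTop (𝓝 0) := by
  have norm_p_lt_one : ‖(p : ℤ_[p])‖ < 1 := (PadicInt.norm_lt_one_iff_dvd _).mpr dvd_rfl
  exact squeeze_zero_norm (padicInt_norm_pow_prime_pow_sub_le_of_dvd_sub hxy) <|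
    (tendsto_pow_atTop_nhds_zero_of_lt_one (norm_nonneg _) norm_p_lt_one).comp
      (tendsto_add_atTop_nat 1)

theorem padicInt_tendsto_pow_nhds_one_of_isUnit {x : ℤ_[p]} (hx : IsUnit x) :
    Tendsto (fun a : ℕ => x ^ (p ^ a * (p - 1))) atTop (𝓝 1) := by
  have pow_sub_one_tendsto :=
    padicInt_tendsto_pow_prime_pow_sub_of_dvd_sub (padicInt_dvd_pow_sub_one_of_isUnit hx)
  simp only [one_pow, ← pow_mul'] at pow_sub_one_tendsto
  exact tendsto_sub_nhds_zero_iff.mp pow_sub_one_tendsto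

theorem padicInt_tendsto_pow_nhds_zero_of_not_isUnit {x : ℤ_[p]} (hx : ¬ IsUnit x) :
    Tendsto (fun a : ℕ => x ^ (p ^ a * (p - 1))) atTop (𝓝 0) := by
  have norm_lt_one : ‖x‖ < 1 := PadicInt.not_isUnit_iff.mp hx
  have exponent_tendsto : Tendsto (fun a : ℕ => p ^ a * (p - 1)) atTop atTop :=
    (tendsto_pow_atTop_atTop_of_one_lt hp.out.one_lt).atTop_mul_const'
      (Nat.sub_pos_of_lt hp.out.one_lt)
  exact (tendsto_pow_atTop_nhds_zero_of_norm_lt_one norm_lt_one).comp exponent_tendsto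

theorem sigma_padic_limit_general {ι : Type*} (s : Finset ι) (x : ι → ℤ_[p])
    [DecidablePred fun i => IsUnit (x i)] (l : ℕ) :
    Tendsto (fun a : ℕ => ∑ i ∈ s, x i ^ (p ^ a * (p - 1) + l)) atTop
      (𝓝 (∑ i ∈ s with IsUnit (x i), x i ^ l)) := by
  simp only [Finset.sum_filter, pow_add]
  refine tendsto_finsetSum s fun i _ => ?_
  split_ifs with hi
  · simpa only [one_mul] using
      (padicInt_tendsto_pow_nhds_one_of_isUnit hi).mul_const (x i ^ l)
  · simpa only [zero_mul] using
      (padicInt_tendsto_pow_nhds_zero_of_not_isUnit hi).mul_const (x i ^ l)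

end PadicPowers

/-- The Fourier coefficients `σ_r(n)` of the classical Eisenstein series `G_{r+1}` with
`r = p^a(p−1)+l` converge p-adically to `σ_l^⋆(n) = Σ_{d∣n, p∤d} d^l`. -/
theorem sigma_padic_limit
    (p : ℕ) [Fact p.Prime] (l n : ℕ) (hl : 1 ≤ l) (hn : 1 ≤ n) :
    Filter.Tendsto
      (fun a : ℕ => ∑ d ∈ n.divisors, (d : ℤ_[p]) ^ (p ^ a * (p - 1) + l))
      Filter.atTop
      (nhds (∑ d ∈ n.divisors.filter (fun d => ¬ p ∣ d), (d : ℤ_[p]) ^ l)) := by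
  classical
  simpa only [padicInt_isUnit_natCast_iff] using
    sigma_padic_limit_general n.divisors (fun d => (d : ℤ_[p])) l
end

section
/- Let p ≥ 5 be a prime. Then, in ℚ_p, the sequence m ↦ −B_{2+p^m(p−1)}/(2·(2+p^m(p−1))) converges as m → ∞ to (p−1)/24. -/
/-!
The Bernoulli number `B_k` is the `p`-adic limit of the averages `p⁻ⁿ ∑_{a < pⁿ} aᵏ`, and by
Faulhaber's formula and the von Staudt–Clausen theorem the convergence is uniform in `k`. One may
therefore pass to the limit in the exponent inside the average. Along the exponents `k + pᵐ(p - 1)`,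
Fermat's little theorem gives `a ^ (k + pᵐ(p - 1)) → aᵏ` if `p ∤ a`, while the limit is `0` if
`p ∣ a`. Removing the multiples of `p` from the average of `aᵏ` multiplies its limit by the Euler
factor `1 - p ^ (k - 1)`, so `B_{k + pᵐ(p - 1)} → (1 - p ^ (k - 1)) B_k`.
-/

open Filter Finset Topology

theorem choose_succ_div_succ (K : Type*) [Field K] [CharZero K] {k i : ℕ} (hi : i ≤ k) :
    ((k + 1).choose i : K) / (k + 1) = k.choose i / ((k - i : ℕ) + 1) := by
  have h : k.choose i * (k + 1) = (k + 1).choose i * (k - i + 1) := by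
    rw [Nat.choose_mul_succ_eq, Nat.succ_sub hi]
  rw [div_eq_div_iff (Nat.cast_add_one_ne_zero k) (Nat.cast_add_one_ne_zero (k - i))]
  exact_mod_cast h.symm

theorem sum_range_pow_div_sub_bernoulli (K : Type*) [Field K] [CharZero K] {N : ℕ} (hN : N ≠ 0)
    (k : ℕ) :
    (∑ a ∈ range N, (a : K) ^ k) / N - (bernoulli k : ℚ) =
      ∑ i ∈ range k,
        ((bernoulli i : ℚ) : K) * k.choose i * ((N : K) ^ (k - i) / ((k - i : ℕ) + 1)) := by
  suffices h : (∑ a ∈ range N, (a : ℚ) ^ k) / N - bernoulli k =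
      ∑ i ∈ range k, bernoulli i * k.choose i * ((N : ℚ) ^ (k - i) / ((k - i : ℕ) + 1)) by
    simpa using congrArg (Rat.cast : ℚ → K) h
  have hN' : (N : ℚ) ≠ 0 := Nat.cast_ne_zero.2 hN
  have hterm : ∀ i ∈ range (k + 1),
      bernoulli i * (k + 1).choose i * (N : ℚ) ^ (k + 1 - i) / (k + 1) / N =
        bernoulli i * k.choose i * ((N : ℚ) ^ (k - i) / ((k - i : ℕ) + 1)) := fun i hi ↦ by
    have hik : i ≤ k := Nat.lt_succ_iff.1 (mem_range.1 hi)
    calc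
      _ = bernoulli i * ((k + 1).choose i / (k + 1)) * (N : ℚ) ^ (k - i) := by
        rw [Nat.succ_sub hik, pow_succ]
        field_simp
      _ = _ := by
        rw [choose_succ_div_succ ℚ hik]
        ring
  rw [sum_range_pow, sum_div, sum_congr rfl hterm, sum_range_succ]
  simp

theorem sum_range_mul_filter_dvd {M : Type*} [AddCommMonoid M] {q : ℕ} (hq : 0 < q) (n : ℕ)
    (f : ℕ → M) : ∑ a ∈ range (q * n) with q ∣ a, f a = ∑ b ∈ range n, f (q * b) := by
  have himage : {a ∈ range (q * n) | q ∣ a} = (range n).image (q * ·) := by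
    ext a
    simp only [mem_filter, mem_range, mem_image]
    constructor
    · rintro ⟨hlt, b, rfl⟩
      exact ⟨b, lt_of_mul_lt_mul_left' hlt, rfl⟩
    · rintro ⟨b, hb, rfl⟩
      exact ⟨Nat.mul_lt_mul_of_pos_left hb hq, dvd_mul_right q b⟩
  rw [himage, sum_image fun _ _ _ _ h ↦ Nat.eq_of_mul_eq_mul_left hq h]

section Padic

variable {p : ℕ} [Fact p.Prime]

theorem padic_inv_norm_natCast_le {n : ℕ} (hn : n ≠ 0) : ‖(n : ℚ_[p])‖⁻¹ ≤ n := by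
  rw [Padic.norm_eq_zpow_neg_valuation (Nat.cast_ne_zero.2 hn), Padic.valuation_natCast, zpow_neg,
    inv_inv, zpow_natCast]
  exact_mod_cast Nat.le_of_dvd hn.bot_lt pow_padicValNat_dvd

theorem padic_inv_norm_prime_le {q : ℕ} (hq : q.Prime) : ‖(q : ℚ_[p])‖⁻¹ ≤ p := by
  have hp : p.Prime := Fact.out
  by_cases hpq : p = q
  · subst hpq
    simp
  · have hunit : ‖(q : ℚ_[p])‖ = 1 :=
      Padic.norm_natCast_eq_one_iff.2 ((Nat.coprime_primes hp hq).2 hpq)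
    simpa [hunit] using hp.one_le

theorem padic_norm_bernoulli_le (k : ℕ) : ‖((bernoulli k : ℚ) : ℚ_[p])‖ ≤ p := by
  obtain heven | hodd := k.even_or_odd
  · obtain ⟨j, rfl⟩ := heven.two_dvd
    obtain ⟨z, hz⟩ := Bernoulli.vonStaudt_clausen j
    have hcast := congrArg (Rat.cast : ℚ → ℚ_[p]) (eq_sub_of_add_eq hz.symm)
    push_cast at hcast
    rw [hcast, sub_eq_add_neg]
    refine (IsUltrametricDist.norm_add_le_max _ _).trans (max_le ?_ ?_)
    · exact (Padic.norm_int_le_one z).trans (mod_cast (Fact.out : p.Prime).one_le)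
    · rw [norm_neg]
      refine IsUltrametricDist.norm_sum_le_of_forall_le_of_nonneg p.cast_nonneg fun q hq ↦ ?_
      simpa using padic_inv_norm_prime_le (mem_filter.1 hq).2.1
  · obtain rfl | hk := eq_or_ne k 1
    · simpa [neg_div] using padic_inv_norm_prime_le Nat.prime_two
    · rw [bernoulli_eq_zero_of_odd hodd (lt_of_le_of_ne hodd.pos hk.symm)]
      simp

theorem padic_norm_pow_div_succ_le {x : ℚ_[p]} (hx : ‖x‖ ≤ (p : ℝ)⁻¹) {j : ℕ} (hj : j ≠ 0) :
    ‖x ^ j / (j + 1)‖ ≤ p * ‖x‖ := by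
  have hp : p.Prime := Fact.out
  have hp0 : (0 : ℝ) < p := mod_cast hp.pos
  have hpx : p * ‖x‖ ≤ 1 := by rwa [← le_inv_mul_iff₀ hp0, mul_one]
  have hsucc : ‖((j + 1 : ℕ) : ℚ_[p])‖⁻¹ ≤ (p : ℝ) ^ j :=
    (padic_inv_norm_natCast_le j.succ_ne_zero).trans (mod_cast Nat.lt_pow_self hp.one_lt)
  calc
    ‖x ^ j / (j + 1)‖ = ‖((j + 1 : ℕ) : ℚ_[p])‖⁻¹ * ‖x‖ ^ j := by
      rw [norm_div, norm_pow, div_eq_inv_mul, Nat.cast_succ]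
    _ ≤ (p : ℝ) ^ j * ‖x‖ ^ j := by gcongr
    _ = (p * ‖x‖) ^ j := (mul_pow ..).symm
    _ ≤ p * ‖x‖ := pow_le_of_le_one (by positivity) hpx hj

theorem padic_norm_sum_range_pow_div_sub_bernoulli_le {N : ℕ} (hN : N ≠ 0) (hpN : p ∣ N) (k : ℕ) :
    ‖(∑ a ∈ range N, (a : ℚ_[p]) ^ k) / N - (bernoulli k : ℚ)‖ ≤ p * (p * ‖(N : ℚ_[p])‖) := by
  have hNp : ‖(N : ℚ_[p])‖ ≤ (p : ℝ)⁻¹ := by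
    obtain ⟨M, rfl⟩ := hpN
    rw [Nat.cast_mul, norm_mul, Padic.norm_p]
    exact mul_le_of_le_one_right (by positivity) (IsUltrametricDist.norm_natCast_le_one ℚ_[p] M)
  rw [sum_range_pow_div_sub_bernoulli ℚ_[p] hN]
  refine IsUltrametricDist.norm_sum_le_of_forall_le_of_nonneg (by positivity) fun i hi ↦ ?_
  have hki : k - i ≠ 0 := (Nat.sub_pos_of_lt (mem_range.1 hi)).ne'
  rw [norm_mul, norm_mul]
  gcongr
  · exact (mul_le_of_le_one_right (norm_nonneg _)
      (IsUltrametricDist.norm_natCast_le_one ℚ_[p] _)).trans (padic_norm_bernoulli_le i)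
  · exact padic_norm_pow_div_succ_le hNp hki

theorem padicInt_toZMod_eq_zero_iff_dvd {x : ℤ_[p]} :
    PadicInt.toZMod x = 0 ↔ (p : ℤ_[p]) ∣ x := by
  rw [← RingHom.mem_ker, PadicInt.ker_toZMod, PadicInt.maximalIdeal_eq_span_p,
    Ideal.mem_span_singleton]

theorem padicInt_dvd_pow_prime_sub_one_sub_one {x : ℤ_[p]} (hx : ¬(p : ℤ_[p]) ∣ x) :
    (p : ℤ_[p]) ∣ x ^ (p - 1) - 1 := by
  rw [← padicInt_toZMod_eq_zero_iff_dvd] at hx ⊢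
  rw [map_sub, map_pow, map_one, ZMod.pow_card_sub_one_eq_one hx, sub_self]

theorem padicInt_tendsto_pow_prime_pow {x : ℤ_[p]} (hx : (p : ℤ_[p]) ∣ x - 1) :
    Tendsto (fun m : ℕ ↦ x ^ p ^ m) atTop (𝓝 1) := by
  have hbound (m : ℕ) : ‖x ^ p ^ m - 1‖ ≤ ‖(p : ℤ_[p])‖ ^ (m + 1) := by
    obtain ⟨c, hc⟩ := dvd_sub_pow_of_dvd_sub hx m
    rw [one_pow] at hc
    rw [hc, norm_mul, norm_pow]
    exact mul_le_of_le_one_right (by positivity) c.norm_le_one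
  have hzero : Tendsto (fun m ↦ ‖(p : ℤ_[p])‖ ^ (m + 1)) atTop (𝓝 0) :=
    (tendsto_add_atTop_iff_nat 1).2
      (tendsto_pow_atTop_nhds_zero_of_lt_one (norm_nonneg _) Padic.norm_p_lt_one)
  exact tendsto_iff_norm_sub_tendsto_zero.2
    (squeeze_zero (fun _ ↦ norm_nonneg _) hbound hzero)

theorem padicInt_tendsto_pow_add_prime_pow_mul {x : ℤ_[p]} (hx : ¬(p : ℤ_[p]) ∣ x) (k : ℕ) :
    Tendsto (fun m : ℕ ↦ x ^ (k + p ^ m * (p - 1))) atTop (𝓝 (x ^ k)) := by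
  have hlim := (padicInt_tendsto_pow_prime_pow
    (padicInt_dvd_pow_prime_sub_one_sub_one hx)).const_mul (x ^ k)
  simpa only [pow_add, mul_comm (p ^ _), pow_mul, mul_one] using hlim

theorem padic_tendsto_natCast_pow_add_prime_pow_mul (a k : ℕ) :
    Tendsto (fun m : ℕ ↦ (a : ℚ_[p]) ^ (k + p ^ m * (p - 1))) atTop
      (𝓝 (if p ∣ a then 0 else (a : ℚ_[p]) ^ k)) := by
  split_ifs with ha
  · have hp : 1 < p := (Fact.out : p.Prime).one_lt
    have hexp : Tendsto (fun m : ℕ ↦ k + p ^ m * (p - 1)) atTop atTop :=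
      tendsto_atTop_mono (fun _ ↦ Nat.le_add_left _ k)
        ((tendsto_pow_atTop_atTop_of_one_lt hp).atTop_mul_const' (Nat.sub_pos_of_lt hp))
    have hnorm : ‖(a : ℚ_[p])‖ < 1 := Padic.norm_natCast_lt_one_iff.2 ha
    exact (tendsto_pow_atTop_nhds_zero_of_norm_lt_one hnorm).comp hexp
  · have ha' : ¬(p : ℤ_[p]) ∣ a := by
      rwa [← PadicInt.norm_lt_one_iff_dvd, PadicInt.norm_natCast_lt_one_iff]
    simpa using tendsto_subtype_rng.1 (padicInt_tendsto_pow_add_prime_pow_mul ha' k)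

/-- The Riemann sum `p⁻ⁿ ∑_{a < pⁿ} f a`, whose limit as `n → ∞` is the Volkenborn integral of `f`
over `ℤ_p`. Only the values of the integrand at natural numbers enter. -/
noncomputable def volkenbornSum (f : ℕ → ℚ_[p]) (n : ℕ) : ℚ_[p] :=
  (∑ a ∈ range (p ^ n), f a) / (p : ℚ_[p]) ^ n

theorem tendstoUniformly_volkenbornSum_pow :
    TendstoUniformly (fun n k ↦ volkenbornSum (fun a ↦ (a : ℚ_[p]) ^ k) n)
      (fun k ↦ ((bernoulli k : ℚ) : ℚ_[p])) atTop := by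
  have hp : p.Prime := Fact.out
  have hzero : Tendsto (fun n ↦ p * (p * ‖((p ^ n : ℕ) : ℚ_[p])‖)) atTop (𝓝 0) := by
    simpa using ((tendsto_pow_atTop_nhds_zero_of_lt_one (norm_nonneg _)
      (Padic.norm_p_lt_one (p := p))).const_mul (p : ℝ)).const_mul (p : ℝ)
  refine Metric.tendstoUniformly_iff.2 fun ε hε ↦ ?_
  filter_upwards [hzero.eventually_lt_const hε, eventually_ne_atTop 0] with n hn hn0 k
  rw [dist_comm, dist_eq_norm, volkenbornSum, ← Nat.cast_pow]
  exact (padic_norm_sum_range_pow_div_sub_bernoulli_le (pow_ne_zero n hp.ne_zero)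
    (dvd_pow_self p hn0) k).trans_lt hn

theorem volkenbornSum_ite_dvd (f : ℕ → ℚ_[p]) (n : ℕ) :
    volkenbornSum (fun a ↦ if p ∣ a then 0 else f a) (n + 1) =
      volkenbornSum f (n + 1) - (p : ℚ_[p])⁻¹ * volkenbornSum (fun b ↦ f (p * b)) n := by
  have hp : p.Prime := Fact.out
  have hsum : ∑ a ∈ range (p ^ (n + 1)), (if p ∣ a then 0 else f a) =
      ∑ a ∈ range (p ^ (n + 1)), f a - ∑ b ∈ range (p ^ n), f (p * b) := by
    rw [pow_succ', ← sum_range_mul_filter_dvd hp.pos, eq_sub_iff_add_eq', sum_filter,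
      ← sum_add_distrib]
    exact sum_congr rfl fun a _ ↦ by split_ifs <;> simp
  rw [volkenbornSum, hsum, volkenbornSum, volkenbornSum, pow_succ (p : ℚ_[p])]
  ring

theorem tendsto_volkenbornSum_ite_dvd_pow (k : ℕ) :
    Tendsto (volkenbornSum fun a ↦ if p ∣ a then 0 else (a : ℚ_[p]) ^ k) atTop
      (𝓝 ((1 - (p : ℚ_[p]) ^ (k - 1 : ℤ)) * (bernoulli k : ℚ))) := by
  have hp : (p : ℚ_[p]) ≠ 0 := Nat.cast_ne_zero.2 (Fact.out : p.Prime).ne_zero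
  have hlim := (tendstoUniformly_volkenbornSum_pow (p := p)).tendsto_at k
  have hrec (n : ℕ) : volkenbornSum (fun a ↦ if p ∣ a then 0 else (a : ℚ_[p]) ^ k) (n + 1) =
      volkenbornSum (fun a ↦ (a : ℚ_[p]) ^ k) (n + 1) -
        (p : ℚ_[p]) ^ (k - 1 : ℤ) * volkenbornSum (fun a ↦ (a : ℚ_[p]) ^ k) n := by
    rw [volkenbornSum_ite_dvd, zpow_sub_one₀ hp, zpow_natCast]
    simp only [volkenbornSum, Nat.cast_mul, mul_pow, ← mul_sum]
    ring
  rw [← tendsto_add_atTop_iff_nat 1, sub_mul, one_mul]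
  simpa only [hrec] using ((tendsto_add_atTop_iff_nat 1).2 hlim).sub (hlim.const_mul _)

theorem padic_tendsto_bernoulli_add_prime_pow_mul (k : ℕ) :
    Tendsto (fun m : ℕ ↦ ((bernoulli (k + p ^ m * (p - 1)) : ℚ) : ℚ_[p])) atTop
      (𝓝 ((1 - (p : ℚ_[p]) ^ (k - 1 : ℤ)) * (bernoulli k : ℚ))) :=
  have huniform := tendstoUniformly_volkenbornSum_pow.comp fun m ↦ k + p ^ m * (p - 1)
  have hpointwise (n : ℕ) := (tendsto_finsetSum (range (p ^ n)) fun a _ ↦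
    padic_tendsto_natCast_pow_add_prime_pow_mul a k).div_const ((p : ℚ_[p]) ^ n)
  huniform.tendsto_of_eventually_tendsto (.of_forall hpointwise)
    (tendsto_volkenbornSum_ite_dvd_pow k)

theorem padic_tendsto_add_prime_pow_mul (k : ℕ) :
    Tendsto (fun m : ℕ ↦ ((k + p ^ m * (p - 1) : ℕ) : ℚ_[p])) atTop (𝓝 k) := by
  have hpow : Tendsto (fun m ↦ (p : ℚ_[p]) ^ m) atTop (𝓝 0) :=
    tendsto_pow_atTop_nhds_zero_of_norm_lt_one Padic.norm_p_lt_one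
  simpa using (hpow.mul_const ((p - 1 : ℕ) : ℚ_[p])).const_add (k : ℚ_[p])

end Padic

theorem eisenstein_constant_term_padic_limit_general (p : ℕ) [Fact p.Prime] {k : ℕ} (hk : k ≠ 0) :
    Tendsto
      (fun m : ℕ ↦
        -((bernoulli (k + p ^ m * (p - 1)) : ℚ) : ℚ_[p]) /
          ((2 * (k + p ^ m * (p - 1)) : ℕ) : ℚ_[p]))
      atTop
      (𝓝 (-((1 - (p : ℚ_[p]) ^ (k - 1 : ℤ)) * (bernoulli k : ℚ)) / (2 * k))) := by
  have hden := (padic_tendsto_add_prime_pow_mul (p := p) k).const_mul 2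
  have hden_ne : (2 * k : ℚ_[p]) ≠ 0 := mul_ne_zero two_ne_zero (Nat.cast_ne_zero.2 hk)
  simpa only [Nat.cast_mul, Nat.cast_ofNat, Pi.div_def] using
    (padic_tendsto_bernoulli_add_prime_pow_mul k).neg.div hden hden_ne

/-- The constant terms `−B_k/(2k)` of the classical Eisenstein series `G_k` for
`k = 2 + p^m(p−1)` converge p-adically to `(p−1)/24`, the constant term of `G_2^⋆`. -/
theorem eisenstein_constant_term_padic_limit
    (p : ℕ) [Fact p.Prime] (hp5 : 5 ≤ p) :
    Filter.Tendsto
      (fun m : ℕ =>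
        -((bernoulli (2 + p ^ m * (p - 1)) : ℚ) : ℚ_[p]) /
          (((2 * (2 + p ^ m * (p - 1)) : ℕ) : ℚ_[p])))
      Filter.atTop
      (nhds (((p : ℚ_[p]) - 1) / 24)) := by
  convert eisenstein_constant_term_padic_limit_general p two_ne_zero using 2
  rw [bernoulli_two, Nat.cast_two, show (2 - 1 : ℤ) = 1 from rfl, zpow_one]
  push_cast
  ring
end
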